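/- Let n ≥ 1, let V : ℝⁿ → ℝ be bounded, continuous and nonnegative, and let u : [0,∞) × ℝⁿ → ℝ be a smooth solution of ∂ₜ²u − Δₓu + V·u + ∂ₜu = 0 with u(0,·) = u₀ ∈ Cc^∞(ℝⁿ), ∂ₜu(0,·) = u₁ ∈ Cc^∞(ℝⁿ), such that for every T > 0 there is R > 0 with u(t,·) supported in the ball of radius R for all t ∈ [0,T]. Set I₀² := 3E(0) + ½‖u₀‖² + (u₁,u₀). Then for all t ≥ 0: ‖u(t,·)‖ ≤ 2 I₀ and ∫₀ᵗ E(s) ds ≤ I₀² + E(0). -/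

import Mathlib

open MeasureTheory

noncomputable section

/-- The Laplacian of `f : ℝⁿ → ℝ`, as the sum of second derivatives in the
coordinate directions. -/
def lap {n : ℕ} (f : EuclideanSpace ℝ (Fin n) → ℝ) (x : EuclideanSpace ℝ (Fin n)) : ℝ :=
  ∑ i : Fin n, iteratedFDeriv ℝ 2 f x ![EuclideanSpace.single i 1, EuclideanSpace.single i 1]

/-- The total energy `E(t) = ½∫ (|∂ₜu|² + |∇ₓu|² + V|u|²) dx`. -/
def energy {n : ℕ} (V : EuclideanSpace ℝ (Fin n) → ℝ)
    (u : ℝ → EuclideanSpace ℝ (Fin n) → ℝ) (t : ℝ) : ℝ :=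
  (1/2) * ∫ x, ((deriv (fun s => u s x) t) ^ 2 + ‖gradient (u t) x‖ ^ 2 + V x * (u t x) ^ 2)

/-!
Multiply the equation by `w = 2∂ₜu + u`. Since `w(∂ₜ²u + Vu + ∂ₜu) = w Δu`, the Lyapunov functional
`L(t) = 2E(t) + (∂ₜu, u) + ½‖u‖²` has a density `ℓ` with `∂ₜℓ = -2e + ⟪∇u, ∇w⟫ + w Δu`, where `e` is
the energy density. The last two terms form the divergence of `w∇u`, which integrates to zero, so
`L(t) + 2∫₀ᵗ E = L(0) = I₀² - E(0)`. Completing the square gives `L(t) ≥ ¼‖u(t)‖²`, and both bounds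
follow.
-/

open Function Set Laplacian
open scoped Gradient RealInnerProductSpace

/-- The partial derivative `∂ₜu` of a function of time and space; as for `deriv`, its value is `0`
where `u` is not differentiable in time. -/
def timeDeriv {X F : Type*} [NormedAddCommGroup F] [NormedSpace ℝ F] (u : ℝ → X → F)
    (t : ℝ) (x : X) : F :=
  deriv (fun s => u s x) t

section TimeDerivIntegral

variable {X F : Type*} [NormedAddCommGroup F]

lemma timeDeriv_eq_zero_of_eqOn_Icc [NormedSpace ℝ F] {u : ℝ → X → F} {a b t : ℝ} {x : X}
    (hab : a < b) (ht : t ∈ Icc a b) (hu : DifferentiableAt ℝ (fun s => u s x) t)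
    (hzero : ∀ s ∈ Icc a b, u s x = 0) : timeDeriv u t x = 0 := by
  have hunique : UniqueDiffWithinAt ℝ (Icc a b) t := uniqueDiffOn_Icc hab t ht
  rw [timeDeriv, ← hu.derivWithin hunique, derivWithin_congr hzero (hzero t ht),
    derivWithin_fun_const]
  rfl

variable [TopologicalSpace X] [T2Space X] [SecondCountableTopology X] [MeasurableSpace X]
  [BorelSpace X] {μ : Measure X} [IsFiniteMeasureOnCompacts μ] [SFinite μ] {K : Set X} {a b : ℝ}

lemma integrable_uncurry_of_continuous_of_eq_zero {f : ℝ → X → F} (hf : Continuous (uncurry f))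
    (hK : IsCompact K) (hzero : ∀ t ∈ uIcc a b, ∀ x ∉ K, f t x = 0) :
    Integrable (uncurry f) ((volume.restrict (uIoc a b)).prod μ) := by
  have hcompact : IntegrableOn (uncurry f) (uIcc a b ×ˢ K) (volume.prod μ) :=
    hf.continuousOn.integrableOn_compact (isCompact_uIcc.prod hK)
  rw [← Measure.restrict_univ (μ := μ), Measure.prod_restrict, ← IntegrableOn]
  refine hcompact.of_forall_sdiff_eq_zero (measurableSet_uIoc.prod .univ) ?_
  rintro ⟨t, x⟩ ⟨⟨ht, -⟩, htx⟩
  exact hzero t (uIoc_subset_uIcc ht) x fun hx => htx ⟨uIoc_subset_uIcc ht, hx⟩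

lemma intervalIntegral_integral_timeDeriv [NormedSpace ℝ F] [CompleteSpace F] {u : ℝ → X → F}
    (hdiff : ∀ t x, DifferentiableAt ℝ (fun s => u s x) t)
    (hcont : Continuous (uncurry (timeDeriv u))) (hK : IsCompact K)
    (hzero : ∀ t ∈ uIcc a b, ∀ x ∉ K, timeDeriv u t x = 0) :
    ∫ t in a..b, ∫ x, timeDeriv u t x ∂μ = ∫ x, (u b x - u a x) ∂μ := by
  rw [intervalIntegral_integral_swap (integrable_uncurry_of_continuous_of_eq_zero hcont hK hzero)]
  refine integral_congr_ae (.of_forall fun x => ?_)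
  exact intervalIntegral.integral_eq_sub_of_hasDerivAt (fun t _ => (hdiff t x).hasDerivAt)
    ((hcont.comp (Continuous.prodMk_left x)).intervalIntegrable a b)

end TimeDerivIntegral

section Slices

variable {E F : Type*} [NormedAddCommGroup E] [NormedSpace ℝ E] [NormedAddCommGroup F]
  [NormedSpace ℝ F] {u : ℝ → E → F}

lemma hasDerivAt_slice {t : ℝ} {x : E} (hu : DifferentiableAt ℝ (uncurry u) (t, x)) :
    HasDerivAt (fun s => u s x) (fderiv ℝ (uncurry u) (t, x) (1, 0)) t :=
  HasFDerivAt.comp_hasDerivAt (f := fun s => (s, x)) t hu.hasFDerivAt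
    ((hasDerivAt_id t).prodMk (hasDerivAt_const t x))

lemma hasDerivAt_timeDeriv (hu : Differentiable ℝ (uncurry u)) (t : ℝ) (x : E) :
    HasDerivAt (fun s => u s x) (timeDeriv u t x) t :=
  (hasDerivAt_slice (hu (t, x))).differentiableAt.hasDerivAt

lemma uncurry_timeDeriv_eq_fderiv (hu : Differentiable ℝ (uncurry u)) :
    uncurry (timeDeriv u) = fun p => fderiv ℝ (uncurry u) p (1, 0) :=
  funext fun p => (hasDerivAt_slice (hu p)).deriv

lemma timeDeriv_eq_zero_of_notMem (hu : Differentiable ℝ (uncurry u)) {K : Set E} {a b t : ℝ}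
    (hab : a < b) (hzero : ∀ s ∈ Icc a b, ∀ x ∉ K, u s x = 0) (ht : t ∈ Icc a b) :
    ∀ x ∉ K, timeDeriv u t x = 0 := fun x hx =>
  timeDeriv_eq_zero_of_eqOn_Icc hab ht (hasDerivAt_timeDeriv hu t x).differentiableAt
    fun s hs => hzero s hs x hx

lemma fderiv_slice {t : ℝ} {x : E} (hu : DifferentiableAt ℝ (uncurry u) (t, x)) :
    fderiv ℝ (u t) x = (fderiv ℝ (uncurry u) (t, x)).comp (.inr ℝ ℝ E) :=
  (hu.hasFDerivAt.comp x (hasFDerivAt_prodMk_right t x)).fderiv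

lemma contDiff_uncurry_timeDeriv {m : ℕ} (hu : ContDiff ℝ (m + 1) (uncurry u)) :
    ContDiff ℝ m (uncurry (timeDeriv u)) := by
  rw [uncurry_timeDeriv_eq_fderiv (hu.differentiable (by simp))]
  exact (hu.fderiv_right le_rfl).clm_apply contDiff_const

lemma continuous_fderiv_slice (hu : ContDiff ℝ 1 (uncurry u)) :
    Continuous fun p : ℝ × E => fderiv ℝ (u p.1) p.2 := by
  simp_rw [fun p : ℝ × E => fderiv_slice (hu.differentiable one_ne_zero p)]
  exact (hu.continuous_fderiv one_ne_zero).clm_comp continuous_const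

lemma hasDerivAt_fderiv_slice (hu : ContDiff ℝ 2 (uncurry u)) (t : ℝ) (x : E) :
    HasDerivAt (fun s => fderiv ℝ (u s) x) (fderiv ℝ (timeDeriv u t) x) t := by
  have hdiff : Differentiable ℝ (uncurry u) := hu.differentiable two_ne_zero
  have hdiff' : Differentiable ℝ (fderiv ℝ (uncurry u)) :=
    (hu.fderiv_right (m := 1) (by norm_num)).differentiable one_ne_zero
  have htimeDeriv : Differentiable ℝ (uncurry (timeDeriv u)) :=
    (contDiff_uncurry_timeDeriv (m := 1) hu).differentiable one_ne_zero
  have hsymm : IsSymmSndFDerivAt ℝ (uncurry u) (t, x) := hu.contDiffAt.isSymmSndFDerivAt (by simp)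
  have htime : HasDerivAt (fun s => fderiv ℝ (uncurry u) (s, x))
      (fderiv ℝ (fderiv ℝ (uncurry u)) (t, x) (1, 0)) t :=
    hasDerivAt_slice (u := curry (fderiv ℝ (uncurry u))) (hdiff' (t, x))
  simp_rw [fun s => fderiv_slice (hdiff (s, x))]
  convert htime.clm_comp (hasDerivAt_const t (ContinuousLinearMap.inr ℝ ℝ E)) using 1
  ext v
  simp [fderiv_slice (htimeDeriv (t, x)), uncurry_timeDeriv_eq_fderiv hdiff,
    fderiv_clm_apply (hdiff' (t, x)) (differentiableAt_const _), hsymm.eq (0, v)]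

end Slices

section Gradient

variable {E : Type*} [NormedAddCommGroup E] [InnerProductSpace ℝ E] [CompleteSpace E]

lemma gradient_eq_zero_of_notMem {f : E → ℝ} {K : Set E} (hK : IsClosed K)
    (hzero : ∀ x ∉ K, f x = 0) {x : E} (hx : x ∉ K) : ∇ f x = 0 := by
  have hlocal : f =ᶠ[nhds x] fun _ => 0 := by
    filter_upwards [hK.isOpen_compl.mem_nhds hx] with y hy using hzero y hy
  rw [hlocal.gradient_eq, gradient_fun_const]

lemma continuous_gradient_slice {u : ℝ → E → ℝ} (hu : ContDiff ℝ 1 (uncurry u)) :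
    Continuous fun p : ℝ × E => ∇ (u p.1) p.2 :=
  (InnerProductSpace.toDual ℝ E).symm.continuous.comp (continuous_fderiv_slice hu)

lemma hasDerivAt_gradient_slice {u : ℝ → E → ℝ} (hu : ContDiff ℝ 2 (uncurry u)) (t : ℝ) (x : E) :
    HasDerivAt (fun s => ∇ (u s) x) (∇ (timeDeriv u t) x) t :=
  (InnerProductSpace.toDual ℝ E).symm.toContinuousLinearEquiv.hasFDerivAt.comp_hasDerivAt t
    (hasDerivAt_fderiv_slice hu t x)

end Gradient

section Coordinates

variable {E : Type*} [NormedAddCommGroup E] [InnerProductSpace ℝ E] [FiniteDimensional ℝ E]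
  {f g : E → ℝ} {ι : Type*} [Fintype ι]

lemma inner_gradient_eq_sum_fderiv (b : OrthonormalBasis ι ℝ E) (x : E) :
    ⟪∇ f x, ∇ g x⟫ = ∑ i, fderiv ℝ f x (b i) * fderiv ℝ g x (b i) := by
  rw [← b.sum_inner_mul_inner]
  refine Finset.sum_congr rfl fun i _ => ?_
  rw [inner_gradient_left, real_inner_comm, inner_gradient_left]

lemma laplacian_eq_sum_fderiv_fderiv (b : OrthonormalBasis ι ℝ E)
    (hf : ContDiff ℝ 2 f) (x : E) :
    Δ f x = ∑ i, fderiv ℝ (fun y => fderiv ℝ f y (b i)) x (b i) := by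
  have hf' : Differentiable ℝ (fderiv ℝ f) :=
    (hf.fderiv_right (m := 1) (by norm_num)).differentiable one_ne_zero
  simp [InnerProductSpace.laplacian_eq_iteratedFDeriv_orthonormalBasis f b,
    iteratedFDeriv_two_apply, fderiv_clm_apply (hf' x) (differentiableAt_const _)]

lemma continuous_laplacian (hf : ContDiff ℝ 2 f) : Continuous (Δ f) := by
  rw [funext (laplacian_eq_sum_fderiv_fderiv (stdOrthonormalBasis ℝ E) hf)]
  refine continuous_finsetSum _ fun i _ => ?_
  have hf' : ContDiff ℝ 1 fun x => fderiv ℝ f x (stdOrthonormalBasis ℝ E i) :=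
    (hf.fderiv_right (by norm_num)).clm_apply contDiff_const
  exact (hf'.continuous_fderiv one_ne_zero).clm_apply continuous_const

end Coordinates

section Green

variable {E : Type*} [NormedAddCommGroup E] [MeasurableSpace E] [BorelSpace E] {μ : Measure E}
  [μ.IsAddHaarMeasure] {f g : E → ℝ}

lemma integral_mul_fderiv_eq_neg_of_hasCompactSupport [NormedSpace ℝ E] [FiniteDimensional ℝ E]
    (hf : ContDiff ℝ 1 f) (hg : ContDiff ℝ 1 g) (hsupp : HasCompactSupport g) (v : E) :
    ∫ x, f x * fderiv ℝ g x v ∂μ = -∫ x, fderiv ℝ f x v * g x ∂μ := by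
  have hf' : Continuous fun x => fderiv ℝ f x v :=
    (hf.continuous_fderiv one_ne_zero).clm_apply continuous_const
  have hg' : Continuous fun x => fderiv ℝ g x v :=
    (hg.continuous_fderiv one_ne_zero).clm_apply continuous_const
  exact integral_mul_fderiv_eq_neg_fderiv_mul_of_integrable
    ((hf'.mul hg.continuous).integrable_of_hasCompactSupport hsupp.mul_left)
    ((hf.continuous.mul hg').integrable_of_hasCompactSupport (hsupp.fderiv_apply ℝ v).mul_left)
    ((hf.continuous.mul hg.continuous).integrable_of_hasCompactSupport hsupp.mul_left)
    (fun x _ => hf.differentiable one_ne_zero x) (fun x _ => hg.differentiable one_ne_zero x)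

variable [InnerProductSpace ℝ E] [FiniteDimensional ℝ E]

lemma integral_inner_gradient_eq_neg_integral_laplacian_mul (hf : ContDiff ℝ 2 f)
    (hg : ContDiff ℝ 1 g) (hsupp : HasCompactSupport g) :
    ∫ x, ⟪∇ f x, ∇ g x⟫ ∂μ = -∫ x, Δ f x * g x ∂μ := by
  set b := stdOrthonormalBasis ℝ E
  have hf' (i) : ContDiff ℝ 1 fun x => fderiv ℝ f x (b i) :=
    (hf.fderiv_right (by norm_num)).clm_apply contDiff_const
  have hf'' (i) : Continuous fun x => fderiv ℝ (fun y => fderiv ℝ f y (b i)) x (b i) :=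
    ((hf' i).continuous_fderiv one_ne_zero).clm_apply continuous_const
  have hg' (i) : Continuous fun x => fderiv ℝ g x (b i) :=
    (hg.continuous_fderiv one_ne_zero).clm_apply continuous_const
  simp_rw [inner_gradient_eq_sum_fderiv b, laplacian_eq_sum_fderiv_fderiv b hf, Finset.sum_mul]
  rw [integral_finsetSum, integral_finsetSum, ← Finset.sum_neg_distrib]
  · exact Finset.sum_congr rfl fun i _ =>
      integral_mul_fderiv_eq_neg_of_hasCompactSupport (hf' i) hg hsupp (b i)
  · exact fun i _ => ((hf'' i).mul hg.continuous).integrable_of_hasCompactSupport hsupp.mul_left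
  · exact fun i _ => ((hf' i).continuous.mul (hg' i)).integrable_of_hasCompactSupport
      (hsupp.fderiv_apply ℝ (b i)).mul_left

end Green

section DampedWave

variable {E : Type*} [NormedAddCommGroup E] [InnerProductSpace ℝ E] {V : E → ℝ} {u : ℝ → E → ℝ}

/-- The energy density `½(|∂ₜu|² + |∇ₓu|² + V|u|²)`. -/
def energyDensity [CompleteSpace E] (V : E → ℝ) (u : ℝ → E → ℝ) (t : ℝ) (x : E) : ℝ :=
  (1 / 2) * (timeDeriv u t x ^ 2 + ‖∇ (u t) x‖ ^ 2 + V x * u t x ^ 2)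

/-- The density of the Lyapunov functional `2E(t) + (∂ₜu, u) + ½‖u‖²`. -/
def lyapunovDensity [CompleteSpace E] (V : E → ℝ) (u : ℝ → E → ℝ) (t : ℝ) (x : E) : ℝ :=
  2 * energyDensity V u t x + timeDeriv u t x * u t x + (1 / 2) * u t x ^ 2

/-- The function `2∂ₜu + u` by which the wave equation is multiplied in the energy estimate. -/
def waveMultiplier (u : ℝ → E → ℝ) (t : ℝ) (x : E) : ℝ :=
  2 * timeDeriv u t x + u t x

lemma contDiff_uncurry_waveMultiplier (hu : ContDiff ℝ 2 (uncurry u)) :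
    ContDiff ℝ 1 (uncurry (waveMultiplier u)) :=
  (contDiff_const.mul (contDiff_uncurry_timeDeriv hu)).add (hu.of_le one_le_two)

section Density

variable [CompleteSpace E]

lemma energyDensity_nonneg (hV : ∀ x, 0 ≤ V x) (t : ℝ) (x : E) : 0 ≤ energyDensity V u t x := by
  have := hV x
  unfold energyDensity
  positivity

lemma sq_div_four_le_lyapunovDensity (hV : ∀ x, 0 ≤ V x) (t : ℝ) (x : E) :
    u t x ^ 2 / 4 ≤ lyapunovDensity V u t x := by
  have hpotential : 0 ≤ V x * u t x ^ 2 := mul_nonneg (hV x) (sq_nonneg _)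
  unfold lyapunovDensity energyDensity
  linarith [sq_nonneg (timeDeriv u t x + u t x / 2), sq_nonneg ‖∇ (u t) x‖]

lemma energyDensity_eq_zero_of_notMem {t : ℝ} {K : Set E} (hK : IsClosed K)
    (hzero : ∀ x ∉ K, u t x = 0) (hzero' : ∀ x ∉ K, timeDeriv u t x = 0) {x : E} (hx : x ∉ K) :
    energyDensity V u t x = 0 := by
  simp [energyDensity, hzero x hx, hzero' x hx, gradient_eq_zero_of_notMem hK hzero hx]

lemma lyapunovDensity_eq_zero_of_notMem {t : ℝ} {K : Set E} (hK : IsClosed K)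
    (hzero : ∀ x ∉ K, u t x = 0) (hzero' : ∀ x ∉ K, timeDeriv u t x = 0) {x : E} (hx : x ∉ K) :
    lyapunovDensity V u t x = 0 := by
  simp [lyapunovDensity, energyDensity_eq_zero_of_notMem hK hzero hzero' hx, hzero x hx]

lemma continuous_uncurry_energyDensity (hV : Continuous V) (hu : ContDiff ℝ 2 (uncurry u)) :
    Continuous (uncurry (energyDensity V u)) := by
  have hut : Continuous (uncurry (timeDeriv u)) :=
    (contDiff_uncurry_timeDeriv (m := 1) hu).continuous
  have hgrad := continuous_gradient_slice (hu.of_le one_le_two)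
  exact (((hut.pow 2).add (hgrad.norm.pow 2)).add
    ((hV.comp continuous_snd).mul (hu.continuous.pow 2))).const_mul (1 / 2)

lemma continuous_uncurry_lyapunovDensity (hV : Continuous V) (hu : ContDiff ℝ 2 (uncurry u)) :
    Continuous (uncurry (lyapunovDensity V u)) := by
  have hut : Continuous (uncurry (timeDeriv u)) :=
    (contDiff_uncurry_timeDeriv (m := 1) hu).continuous
  exact (((continuous_uncurry_energyDensity hV hu).const_mul 2).add (hut.mul hu.continuous)).add
    (continuous_const.mul (hu.continuous.pow 2))

lemma gradient_waveMultiplier (hu : ContDiff ℝ 2 (uncurry u)) (t : ℝ) (x : E) :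
    ∇ (waveMultiplier u t) x = (2 : ℝ) • ∇ (timeDeriv u t) x + ∇ (u t) x := by
  have hdu : DifferentiableAt ℝ (u t) x :=
    (hu.comp (contDiff_prodMk_right t)).differentiable two_ne_zero x
  have hdut : DifferentiableAt ℝ (timeDeriv u t) x :=
    ((contDiff_uncurry_timeDeriv (m := 1) hu).comp
      (contDiff_prodMk_right t)).differentiable one_ne_zero x
  have hfderiv : fderiv ℝ (waveMultiplier u t) x =
      (2 : ℝ) • fderiv ℝ (timeDeriv u t) x + fderiv ℝ (u t) x :=
    ((hdut.hasFDerivAt.const_mul 2).add hdu.hasFDerivAt).fderiv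
  simp [gradient, hfderiv]

lemma hasDerivAt_lyapunovDensity (hu : ContDiff ℝ 2 (uncurry u)) (t : ℝ) (x : E) :
    HasDerivAt (fun s => lyapunovDensity V u s x)
      (-(2 * energyDensity V u t x) + (⟪∇ (u t) x, ∇ (waveMultiplier u t) x⟫ +
        (timeDeriv (timeDeriv u) t x + V x * u t x + timeDeriv u t x) * waveMultiplier u t x))
      t := by
  have hut : ContDiff ℝ 1 (uncurry (timeDeriv u)) := contDiff_uncurry_timeDeriv hu
  have hu_t := hasDerivAt_timeDeriv (hu.differentiable two_ne_zero) t x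
  have hu_tt := hasDerivAt_timeDeriv (hut.differentiable one_ne_zero) t x
  have henergy := (((hu_tt.pow 2).add (hasDerivAt_gradient_slice hu t x).norm_sq).add
    ((hu_t.pow 2).const_mul (V x))).const_mul (1 / 2)
  convert! ((henergy.const_mul 2).add (hu_tt.mul hu_t)).add ((hu_t.pow 2).const_mul (1 / 2)) using 1
  simp only [energyDensity, waveMultiplier, gradient_waveMultiplier hu, inner_add_right,
    inner_smul_right, real_inner_self_eq_norm_sq]
  ring

lemma continuous_uncurry_timeDeriv_lyapunovDensity (hV : Continuous V)
    (hu : ContDiff ℝ 2 (uncurry u)) :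
    Continuous (uncurry (timeDeriv (lyapunovDensity V u))) := by
  have hut : ContDiff ℝ 1 (uncurry (timeDeriv u)) := contDiff_uncurry_timeDeriv hu
  have hutt : Continuous (uncurry (timeDeriv (timeDeriv u))) :=
    (contDiff_uncurry_timeDeriv (m := 0) (by simpa using hut)).continuous
  have hw := contDiff_uncurry_waveMultiplier hu
  have hinner := (continuous_gradient_slice (hu.of_le one_le_two)).inner
    (𝕜 := ℝ) (continuous_gradient_slice hw)
  have hforce := (hutt.add ((hV.comp continuous_snd).mul hu.continuous)).add hut.continuous
  convert ((continuous_uncurry_energyDensity hV hu).const_mul 2).neg.add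
    (hinner.add (hforce.mul hw.continuous)) using 1
  exact funext fun p => (hasDerivAt_lyapunovDensity hu p.1 p.2).deriv

end Density

variable [FiniteDimensional ℝ E] [MeasurableSpace E] [BorelSpace E] {K : Set E} {a b t : ℝ}

/-- The total energy `E(t) = ½∫ (|∂ₜu|² + |∇ₓu|² + V|u|²) dx` on a finite-dimensional inner product
space. -/
def totalEnergy (V : E → ℝ) (u : ℝ → E → ℝ) (t : ℝ) : ℝ :=
  ∫ x, energyDensity V u t x

lemma integrable_slice_of_eq_zero {f : ℝ → E → ℝ} (hf : Continuous (uncurry f))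
    (hK : IsCompact K) (hzero : ∀ x ∉ K, f t x = 0) : Integrable (f t) :=
  (hf.comp (Continuous.prodMk_right t)).integrable_of_hasCompactSupport (.intro hK hzero)

lemma totalEnergy_nonneg (hVnonneg : ∀ x, 0 ≤ V x) (t : ℝ) : 0 ≤ totalEnergy V u t :=
  integral_nonneg (energyDensity_nonneg hVnonneg t)

lemma integrable_energyDensity (hV : Continuous V) (hu : ContDiff ℝ 2 (uncurry u))
    (hK : IsCompact K) (hzero : ∀ x ∉ K, u t x = 0) (hzero' : ∀ x ∉ K, timeDeriv u t x = 0) :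
    Integrable (energyDensity V u t) :=
  integrable_slice_of_eq_zero (continuous_uncurry_energyDensity hV hu) hK
    fun _ hx => energyDensity_eq_zero_of_notMem hK.isClosed hzero hzero' hx

lemma integrable_lyapunovDensity (hV : Continuous V) (hu : ContDiff ℝ 2 (uncurry u))
    (hK : IsCompact K) (hzero : ∀ x ∉ K, u t x = 0) (hzero' : ∀ x ∉ K, timeDeriv u t x = 0) :
    Integrable (lyapunovDensity V u t) :=
  integrable_slice_of_eq_zero (continuous_uncurry_lyapunovDensity hV hu) hK
    fun _ hx => lyapunovDensity_eq_zero_of_notMem hK.isClosed hzero hzero' hx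

lemma integral_sq_div_four_le_integral_lyapunovDensity (hVnonneg : ∀ x, 0 ≤ V x)
    (hintegrable : Integrable (lyapunovDensity V u t)) :
    (∫ x, u t x ^ 2) / 4 ≤ ∫ x, lyapunovDensity V u t x := by
  rw [← integral_div]
  exact integral_mono_of_nonneg (.of_forall fun x => by positivity) hintegrable
    (.of_forall (sq_div_four_le_lyapunovDensity hVnonneg t))

lemma integral_lyapunovDensity (hV : Continuous V) (hu : ContDiff ℝ 2 (uncurry u))
    (hK : IsCompact K) (hzero : ∀ x ∉ K, u t x = 0) (hzero' : ∀ x ∉ K, timeDeriv u t x = 0) :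
    ∫ x, lyapunovDensity V u t x =
      2 * totalEnergy V u t + (1 / 2) * (∫ x, u t x ^ 2) + ∫ x, timeDeriv u t x * u t x := by
  have hut : Continuous (uncurry (timeDeriv u)) :=
    (contDiff_uncurry_timeDeriv (m := 1) hu).continuous
  have henergy := integrable_energyDensity hV hu hK hzero hzero'
  have hcross : Integrable fun x => timeDeriv u t x * u t x :=
    integrable_slice_of_eq_zero (f := fun t x => timeDeriv u t x * u t x)
      (hut.mul hu.continuous) hK fun x hx => by simp [hzero x hx]
  have hsq : Integrable fun x => (1 / 2) * u t x ^ 2 :=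
    integrable_slice_of_eq_zero (f := fun t x => (1 / 2) * u t x ^ 2)
      (continuous_const.mul (hu.continuous.pow 2)) hK fun x hx => by simp [hzero x hx]
  simp_rw [lyapunovDensity]
  rw [integral_add ((henergy.const_mul 2).fun_add hcross) hsq,
    integral_add (henergy.const_mul 2) hcross, integral_const_mul, integral_const_mul, totalEnergy]
  ring

lemma integral_timeDeriv_lyapunovDensity (hV : Continuous V) (hu : ContDiff ℝ 2 (uncurry u))
    (hK : IsCompact K) (hzero : ∀ x ∉ K, u t x = 0) (hzero' : ∀ x ∉ K, timeDeriv u t x = 0)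
    (hwave : ∀ x, timeDeriv (timeDeriv u) t x - Δ (u t) x + V x * u t x + timeDeriv u t x = 0) :
    ∫ x, timeDeriv (lyapunovDensity V u) t x = -(2 * totalEnergy V u t) := by
  have hw := contDiff_uncurry_waveMultiplier hu
  have hslice : ContDiff ℝ 2 (u t) := hu.comp (contDiff_prodMk_right t)
  have hwslice : ContDiff ℝ 1 (waveMultiplier u t) := hw.comp (contDiff_prodMk_right t)
  have hwsupp : HasCompactSupport (waveMultiplier u t) :=
    .intro hK fun x hx => by simp [waveMultiplier, hzero x hx, hzero' x hx]
  have henergy := integrable_energyDensity hV hu hK hzero hzero'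
  have hinner : Integrable fun x => ⟪∇ (u t) x, ∇ (waveMultiplier u t) x⟫ :=
    integrable_slice_of_eq_zero (f := fun t x => ⟪∇ (u t) x, ∇ (waveMultiplier u t) x⟫)
      ((continuous_gradient_slice (hu.of_le one_le_two)).inner (continuous_gradient_slice hw)) hK
      fun x hx => by simp [gradient_eq_zero_of_notMem hK.isClosed hzero hx]
  have hlaplacian : Integrable fun x => Δ (u t) x * waveMultiplier u t x :=
    ((continuous_laplacian hslice).mul hwslice.continuous).integrable_of_hasCompactSupport
      hwsupp.mul_left
  have hdensity (x : E) : timeDeriv (lyapunovDensity V u) t x = -(2 * energyDensity V u t x) +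
      (⟪∇ (u t) x, ∇ (waveMultiplier u t) x⟫ + Δ (u t) x * waveMultiplier u t x) := by
    have hforce : timeDeriv (timeDeriv u) t x + V x * u t x + timeDeriv u t x = Δ (u t) x := by
      linarith [hwave x]
    rw [timeDeriv, (hasDerivAt_lyapunovDensity hu t x).deriv, hforce]
  simp_rw [hdensity]
  rw [integral_add (henergy.const_mul 2).fun_neg (hinner.fun_add hlaplacian), integral_neg,
    integral_const_mul, integral_add hinner hlaplacian,
    integral_inner_gradient_eq_neg_integral_laplacian_mul hslice hwslice hwsupp, totalEnergy]
  ring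

lemma integral_lyapunovDensity_add_integral_totalEnergy (hV : Continuous V)
    (hu : ContDiff ℝ 2 (uncurry u)) (hK : IsCompact K) (hab : a < b)
    (hzero : ∀ s ∈ Icc a b, ∀ x ∉ K, u s x = 0)
    (hwave : ∀ s ∈ Icc a b, ∀ x,
      timeDeriv (timeDeriv u) s x - Δ (u s) x + V x * u s x + timeDeriv u s x = 0)
    (ht : t ∈ Icc a b) :
    (∫ x, lyapunovDensity V u t x) + 2 * ∫ s in a..t, totalEnergy V u s =
      ∫ x, lyapunovDensity V u a x := by
  have hdiff (s : ℝ) (x : E) : DifferentiableAt ℝ (fun r => lyapunovDensity V u r x) s :=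
    (hasDerivAt_lyapunovDensity hu s x).differentiableAt
  have hzero_t : ∀ s ∈ Icc a b, ∀ x ∉ K, timeDeriv u s x = 0 := fun s hs =>
    timeDeriv_eq_zero_of_notMem (hu.differentiable two_ne_zero) hab hzero hs
  have hzero_lyapunov : ∀ s ∈ Icc a b, ∀ x ∉ K, lyapunovDensity V u s x = 0 := fun s hs _ hx =>
    lyapunovDensity_eq_zero_of_notMem hK.isClosed (hzero s hs) (hzero_t s hs) hx
  have hintegrable : ∀ s ∈ Icc a b, Integrable (lyapunovDensity V u s) := fun s hs =>
    integrable_lyapunovDensity hV hu hK (hzero s hs) (hzero_t s hs)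
  have hsubset : uIcc a t ⊆ Icc a b := by
    rw [uIcc_of_le ht.1]
    exact Icc_subset_Icc_right ht.2
  have hrate : ∫ s in a..t, ∫ x, timeDeriv (lyapunovDensity V u) s x =
      -(2 * ∫ s in a..t, totalEnergy V u s) := by
    rw [← intervalIntegral.integral_const_mul, ← intervalIntegral.integral_neg]
    exact intervalIntegral.integral_congr fun s hs =>
      integral_timeDeriv_lyapunovDensity hV hu hK (hzero s (hsubset hs))
        (hzero_t s (hsubset hs)) (hwave s (hsubset hs))
  rw [intervalIntegral_integral_timeDeriv hdiff (continuous_uncurry_timeDeriv_lyapunovDensity hV hu)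
      hK fun s hs x hx => timeDeriv_eq_zero_of_eqOn_Icc hab (hsubset hs) (hdiff s x)
        fun r hr => hzero_lyapunov r hr x hx,
    integral_sub (hintegrable t ht) (hintegrable a (left_mem_Icc.2 hab.le))] at hrate
  linarith

theorem damped_wave_L2_bound_and_energy_integral_general (hV : Continuous V)
    (hVnonneg : ∀ x, 0 ≤ V x) (hu : ContDiff ℝ 2 (uncurry u))
    (hwave : ∀ t, 0 ≤ t → ∀ x,
      timeDeriv (timeDeriv u) t x - Δ (u t) x + V x * u t x + timeDeriv u t x = 0)
    (hsupp : ∀ T, 0 < T → ∃ K, IsCompact K ∧ ∀ t ∈ Icc 0 T, ∀ x ∉ K, u t x = 0)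
    (t : ℝ) (ht : 0 ≤ t) :
    √(∫ x, u t x ^ 2) ≤ 2 * √(3 * totalEnergy V u 0 + (1 / 2) * (∫ x, u 0 x ^ 2)
        + ∫ x, timeDeriv u 0 x * u 0 x) ∧
      ∫ s in 0..t, totalEnergy V u s ≤ 3 * totalEnergy V u 0 + (1 / 2) * (∫ x, u 0 x ^ 2)
        + (∫ x, timeDeriv u 0 x * u 0 x) + totalEnergy V u 0 := by
  have hpos : 0 < t + 1 := by linarith
  have hmem : t ∈ Icc 0 (t + 1) := ⟨ht, by linarith⟩
  have hmem₀ : (0 : ℝ) ∈ Icc 0 (t + 1) := left_mem_Icc.2 hpos.le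
  obtain ⟨K, hK, hzero⟩ := hsupp (t + 1) hpos
  have hzero' : ∀ s ∈ Icc 0 (t + 1), ∀ x ∉ K, timeDeriv u s x = 0 := fun s hs =>
    timeDeriv_eq_zero_of_notMem (hu.differentiable two_ne_zero) hpos hzero hs
  have hidentity := integral_lyapunovDensity_add_integral_totalEnergy hV hu hK hpos hzero
    (fun s hs => hwave s hs.1) hmem
  rw [integral_lyapunovDensity hV hu hK (hzero 0 hmem₀) (hzero' 0 hmem₀)] at hidentity
  have hlower := integral_sq_div_four_le_integral_lyapunovDensity hVnonneg
    (integrable_lyapunovDensity hV hu hK (hzero t hmem) (hzero' t hmem))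
  have hnorm : 0 ≤ ∫ x, u t x ^ 2 := integral_nonneg fun x => sq_nonneg _
  have henergy₀ := totalEnergy_nonneg (u := u) hVnonneg 0
  have henergy : 0 ≤ ∫ s in 0..t, totalEnergy V u s :=
    intervalIntegral.integral_nonneg ht fun s _ => totalEnergy_nonneg hVnonneg s
  refine ⟨?_, by linarith⟩
  rw [Real.sqrt_le_iff, mul_pow, Real.sq_sqrt (by linarith)]
  exact ⟨by positivity, by linarith⟩

end DampedWave

lemma exists_isCompact_of_eq_zero_of_le_norm {E : Type*} [NormedAddCommGroup E] [ProperSpace E]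
    {u : ℝ → E → ℝ} {I : Set ℝ} {R : ℝ} (hzero : ∀ t ∈ I, ∀ x, R ≤ ‖x‖ → u t x = 0) :
    ∃ K, IsCompact K ∧ ∀ t ∈ I, ∀ x ∉ K, u t x = 0 := by
  refine ⟨Metric.closedBall 0 R, isCompact_closedBall 0 R, fun t ht x hx => hzero t ht x ?_⟩
  exact (not_le.1 (mt mem_closedBall_zero_iff.2 hx)).le

lemma lap_eq_laplacian {n : ℕ} (f : EuclideanSpace ℝ (Fin n) → ℝ) : lap f = Δ f := by
  simp [InnerProductSpace.laplacian_eq_iteratedFDeriv_orthonormalBasis f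
    (EuclideanSpace.basisFun (Fin n) ℝ), funext_iff, lap]

lemma energy_eq_totalEnergy {n : ℕ} (V : EuclideanSpace ℝ (Fin n) → ℝ)
    (u : ℝ → EuclideanSpace ℝ (Fin n) → ℝ) : energy V u = totalEnergy V u :=
  funext fun _ => (integral_const_mul _ _).symm

theorem damped_wave_L2_bound_and_energy_integral (n : ℕ) (hn : 1 ≤ n)
    (V : EuclideanSpace ℝ (Fin n) → ℝ)
    (hVcont : Continuous V) (hVbdd : ∃ M, ∀ x, |V x| ≤ M)
    (hVnonneg : ∀ x, 0 ≤ V x)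
    (u : ℝ → EuclideanSpace ℝ (Fin n) → ℝ)
    (u₀ u₁ : EuclideanSpace ℝ (Fin n) → ℝ)
    (hu : ContDiff ℝ (⊤ : ℕ∞) (fun p : ℝ × EuclideanSpace ℝ (Fin n) => u p.1 p.2))
    (hu₀smooth : ContDiff ℝ (⊤ : ℕ∞) u₀) (hu₀supp : HasCompactSupport u₀)
    (hu₁smooth : ContDiff ℝ (⊤ : ℕ∞) u₁) (hu₁supp : HasCompactSupport u₁)
    (hPDE : ∀ t, 0 ≤ t → ∀ x,
      deriv (fun s => deriv (fun r => u r x) s) t - lap (u t) x + V x * u t x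
        + deriv (fun s => u s x) t = 0)
    (hinit0 : ∀ x, u 0 x = u₀ x)
    (hinit1 : ∀ x, deriv (fun s => u s x) 0 = u₁ x)
    (hsupp : ∀ T, 0 < T → ∃ R, 0 < R ∧ ∀ t ∈ Set.Icc (0:ℝ) T, ∀ x,
      R ≤ ‖x‖ → u t x = 0)
    :
    ∀ t, 0 ≤ t →
      Real.sqrt (∫ x, (u t x) ^ 2) ≤
        2 * Real.sqrt (3 * energy V u 0 + (1/2) * (∫ x, (u₀ x) ^ 2) + ∫ x, u₁ x * u₀ x) ∧
      (∫ s in (0:ℝ)..t, energy V u s) ≤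
        (3 * energy V u 0 + (1/2) * (∫ x, (u₀ x) ^ 2) + ∫ x, u₁ x * u₀ x)
          + energy V u 0 := by
  simp_rw [lap_eq_laplacian] at hPDE
  simpa only [← energy_eq_totalEnergy, timeDeriv, hinit0, hinit1] using
    damped_wave_L2_bound_and_energy_integral_general hVcont hVnonneg (hu.of_le (by norm_cast)) hPDE
      fun T hT => (hsupp T hT).elim fun _ hR => exists_isCompact_of_eq_zero_of_le_norm hR.2
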